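/- Let n ≥ 5 be an integer and T ∈ ℝ. Define φ(t,x) = (2/|x|)·arctan(|x|/(√(n−4)·(T−t))) for t < T and x ∈ ℝⁿ with x ≠ 0. Then for every t < T and every x ∈ ℝⁿ \ {0}, φ satisfies ∂²_t φ(t,x) − Δφ(t,x) = ((n−3)/(2|x|³))·(2|x|·φ(t,x) − sin(2|x|·φ(t,x))), where Δ is the Laplacian on ℝⁿ. -/

import Mathlib

/-- The Laplacian on `ℝⁿ`, as the sum of the second partial derivatives along
the standard coordinate directions. -/
noncomputable def lapl {n : ℕ} (f : EuclideanSpace ℝ (Fin n) → ℝ)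
    (x : EuclideanSpace ℝ (Fin n)) : ℝ :=
  ∑ i : Fin n,
    fderiv ℝ (fun y => fderiv ℝ f y (EuclideanSpace.single i 1)) x
      (EuclideanSpace.single i 1)

/-!
Writing `u = ψ / r` with `r = ‖x‖` turns the semilinear equation into the corotational wave maps
equation for the angle `ψ`. The blowup solution has `ψ = 2 arctan (r / c)` with `c = k (T - t)`
and `k² = n - 4`. Since `arctan (r / c)` is harmonic in the `(r, c)`-plane, the wave operator
collapses to `ψ_tt - ψ_rr = -(k² + 1) ψ_rr = -(n - 3) ψ_rr`, and the remaining terms, which all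
carry the factor `n - 3`, cancel by the formula for `sin (4 arctan z)`.
-/

open Filter Topology
open scoped InnerProductSpace

section SecondDerivatives

variable {𝕜 F : Type*} [NontriviallyNormedField 𝕜] [NormedAddCommGroup F] [NormedSpace 𝕜 F]

theorem differentiableAt_deriv_of_contDiffAt_two {f : 𝕜 → F} {r : 𝕜} (hf : ContDiffAt 𝕜 2 f r) :
    DifferentiableAt 𝕜 (deriv f) r :=
  (hf.derivWithin (m := 1) (by norm_num)).differentiableAt one_ne_zero

theorem eventually_differentiableAt_of_contDiffAt_two {f : 𝕜 → F} {r : 𝕜}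
    (hf : ContDiffAt 𝕜 2 f r) : ∀ᶠ s in 𝓝 r, DifferentiableAt 𝕜 f s :=
  (hf.eventually (by simp)).mono fun _ hs => hs.differentiableAt two_ne_zero

theorem deriv_deriv_comp_mul_const_sub (f : 𝕜 → F) (k T t : 𝕜) :
    deriv (deriv fun s => f (k * (T - s))) t = k ^ 2 • deriv (deriv f) (k * (T - t)) := by
  have deriv_eq (g : 𝕜 → F) :
      (deriv fun s => g (k * (T - s))) = fun s => -k • deriv g (k * (T - s)) := by
    funext s
    rw [deriv_comp_const_sub (fun z => g (k * z)), deriv_comp_mul_left, neg_smul]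
  rw [deriv_eq, deriv_fun_const_smul_field, deriv_eq, smul_smul, neg_mul_neg, sq]

variable {f : 𝕜 → 𝕜} {r : 𝕜}

theorem hasDerivAt_div_id {f' : 𝕜} (hf : HasDerivAt f f' r) (hr : r ≠ 0) :
    HasDerivAt (fun s => f s / s) (f' / r - f r / r ^ 2) r :=
  (hf.fun_div (hasDerivAt_id' r) hr).congr_deriv (by field_simp)

theorem deriv_deriv_div_id (hf : ContDiffAt 𝕜 2 f r) (hr : r ≠ 0) :
    deriv (deriv fun s => f s / s) r =
      deriv (deriv f) r / r - 2 * deriv f r / r ^ 2 + 2 * f r / r ^ 3 := by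
  have deriv_eq : (deriv fun s => f s / s) =ᶠ[𝓝 r] fun s => deriv f s / s - f s / s / s := by
    filter_upwards [eventually_differentiableAt_of_contDiffAt_two hf, eventually_ne_nhds hr]
      with s hfs hs
    rw [(hasDerivAt_div_id hfs.hasDerivAt hs).deriv, sq, div_div]
  have hf_div := hasDerivAt_div_id (hf.differentiableAt two_ne_zero).hasDerivAt hr
  have hf'_div := hasDerivAt_div_id (differentiableAt_deriv_of_contDiffAt_two hf).hasDerivAt hr
  rw [deriv_eq.deriv_eq, (hf'_div.fun_sub (hasDerivAt_div_id hf_div hr)).deriv]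
  field_simp
  ring

end SecondDerivatives

section RadialFunctions

variable {E : Type*} [NormedAddCommGroup E] [InnerProductSpace ℝ E] {x : E} {g : ℝ → ℝ}

theorem hasFDerivAt_norm (hx : x ≠ 0) :
    HasFDerivAt (fun y : E => ‖y‖) (‖x‖⁻¹ • innerSL ℝ x) x := by
  have hsqrt := (hasStrictFDerivAt_norm_sq x).hasFDerivAt.sqrt
    (pow_ne_zero 2 (norm_ne_zero_iff.mpr hx))
  simp only [Real.sqrt_sq (norm_nonneg _)] at hsqrt
  refine hsqrt.congr_fderiv ?_
  ext v
  simp only [one_div, mul_inv_rev, smul_apply, coe_innerSL_apply, nsmul_eq_mul, Nat.cast_ofNat,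
    smul_eq_mul]
  field_simp

theorem hasFDerivAt_comp_norm {g' : ℝ} (hx : x ≠ 0) (hg : HasDerivAt g g' ‖x‖) :
    HasFDerivAt (fun y : E => g ‖y‖) ((g' / ‖x‖) • innerSL ℝ x) x :=
  (hg.comp_hasFDerivAt x (hasFDerivAt_norm hx)).congr_fderiv (by rw [smul_smul, div_eq_mul_inv])

theorem fderiv_fderiv_comp_norm_apply (hx : x ≠ 0) (hg : ContDiffAt ℝ 2 g ‖x‖) (v : E) :
    fderiv ℝ (fun y => fderiv ℝ (fun z => g ‖z‖) y v) x v =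
      (deriv (deriv g) ‖x‖ - deriv g ‖x‖ / ‖x‖) * ⟪x, v⟫_ℝ ^ 2 / ‖x‖ ^ 2
        + deriv g ‖x‖ / ‖x‖ * ‖v‖ ^ 2 := by
  have fderiv_eq : (fun y => fderiv ℝ (fun z => g ‖z‖) y v) =ᶠ[𝓝 x]
      fun y => deriv g ‖y‖ / ‖y‖ * ⟪y, v⟫_ℝ := by
    filter_upwards [continuous_norm.continuousAt.eventually
      (eventually_differentiableAt_of_contDiffAt_two hg), eventually_ne_nhds hx] with y hgy hy
    simp [(hasFDerivAt_comp_norm hy hgy.hasDerivAt).fderiv]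
  have hradial := hasFDerivAt_comp_norm hx (hasDerivAt_div_id
    (differentiableAt_deriv_of_contDiffAt_two hg).hasDerivAt (norm_ne_zero_iff.mpr hx))
  have hinner : HasFDerivAt (fun y => ⟪y, v⟫_ℝ) (innerSL ℝ v) x := by
    simpa only [real_inner_comm] using! (innerSL ℝ v).hasFDerivAt (x := x)
  rw [fderiv_eq.fderiv_eq, (hradial.fun_mul hinner).fderiv]
  simp only [add_apply, smul_apply, coe_innerSL_apply, real_inner_self_eq_norm_sq, smul_eq_mul]
  field_simp
  ring

end RadialFunctions

section Laplacian

variable {n : ℕ} {x : EuclideanSpace ℝ (Fin n)}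

theorem lapl_congr {f g : EuclideanSpace ℝ (Fin n) → ℝ} (h : f =ᶠ[𝓝 x] g) :
    lapl f x = lapl g x := by
  refine Finset.sum_congr rfl fun i _ => ?_
  have hpartial : (fun y => fderiv ℝ f y (EuclideanSpace.single i 1)) =ᶠ[𝓝 x]
      fun y => fderiv ℝ g y (EuclideanSpace.single i 1) :=
    (h.fderiv (𝕜 := ℝ)).mono fun _ hy => congrArg (· (EuclideanSpace.single i 1)) hy
  rw [hpartial.fderiv_eq]

theorem lapl_comp_norm {g : ℝ → ℝ} (hx : x ≠ 0) (hg : ContDiffAt ℝ 2 g ‖x‖) :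
    lapl (fun y => g ‖y‖) x = deriv (deriv g) ‖x‖ + (n - 1) / ‖x‖ * deriv g ‖x‖ := by
  have hr : ‖x‖ ≠ 0 := norm_ne_zero_iff.mpr hx
  simp only [lapl, fderiv_fderiv_comp_norm_apply hx hg, Finset.sum_add_distrib, ← Finset.sum_div,
    ← Finset.mul_sum, EuclideanSpace.inner_single_right, PiLp.norm_single]
  simp only [Real.ringHom_apply, one_mul, ← EuclideanSpace.real_norm_sq_eq, norm_one, one_pow,
    Finset.sum_const, Finset.card_univ, Fintype.card_fin, nsmul_eq_mul, mul_one]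
  field_simp
  ring

theorem lapl_comp_norm_div_norm {f : ℝ → ℝ} (hx : x ≠ 0) (hf : ContDiffAt ℝ 2 f ‖x‖) :
    lapl (fun y => f ‖y‖ / ‖y‖) x =
      (deriv (deriv f) ‖x‖ + (n - 3) / ‖x‖ * deriv f ‖x‖ - (n - 3) / ‖x‖ ^ 2 * f ‖x‖) / ‖x‖ := by
  have hr : ‖x‖ ≠ 0 := norm_ne_zero_iff.mpr hx
  rw [lapl_comp_norm (g := fun r => f r / r) hx (hf.div contDiffAt_id hr),
    deriv_deriv_div_id hf hr,
    (hasDerivAt_div_id (hf.differentiableAt two_ne_zero).hasDerivAt hr).deriv]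
  field_simp
  ring

end Laplacian

section CorotationalWaveMaps

/-- The equation `ψ_tt - ψ_rr - ((d - 1) / r) ψ_r + ((d - 1) / (2 r²)) sin (2 ψ) = 0` at `(t, r)`
for the polar angle `ψ` of a corotational wave map from `ℝ^{1+d}` into `S^d`. The dimension enters
only as a coefficient, so it is allowed to be any real number. -/
def SolvesCorotationalWaveMapAt (d : ℝ) (ψ : ℝ → ℝ → ℝ) (t r : ℝ) : Prop :=
  deriv (deriv fun s => ψ s r) t - deriv (deriv (ψ t)) r - (d - 1) / r * deriv (ψ t) r
    + (d - 1) / (2 * r ^ 2) * Real.sin (2 * ψ t r) = 0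

theorem SolvesCorotationalWaveMapAt.deriv_deriv_sub_lapl_div_norm {n : ℕ} {ψ : ℝ → ℝ → ℝ} {t : ℝ}
    {x : EuclideanSpace ℝ (Fin n)} (h : SolvesCorotationalWaveMapAt (n - 2) ψ t ‖x‖)
    (hx : x ≠ 0) (hψ : ContDiffAt ℝ 2 (ψ t) ‖x‖) :
    deriv (deriv fun s => ψ s ‖x‖ / ‖x‖) t - lapl (fun y => ψ t ‖y‖ / ‖y‖) x =
      (n - 3) / (2 * ‖x‖ ^ 3) * (2 * ψ t ‖x‖ - Real.sin (2 * ψ t ‖x‖)) := by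
  have hr : ‖x‖ ≠ 0 := norm_ne_zero_iff.mpr hx
  have deriv_eq : (deriv fun s => ψ s ‖x‖ / ‖x‖) = fun s => deriv (fun s' => ψ s' ‖x‖) s / ‖x‖ :=
    funext fun _ => deriv_div_const _
  rw [deriv_eq, deriv_div_const, lapl_comp_norm_div_norm hx hψ]
  unfold SolvesCorotationalWaveMapAt at h
  linear_combination (norm := skip) h / ‖x‖
  field_simp
  ring

end CorotationalWaveMaps

section BlowupSolution

theorem sin_four_mul_arctan (z : ℝ) :
    Real.sin (4 * Real.arctan z) = 4 * z * (1 - z ^ 2) / (1 + z ^ 2) ^ 2 := by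
  have hcos_sq := Real.cos_sq_arctan z
  have hsin : Real.sin (Real.arctan z) = z * Real.cos (Real.arctan z) := by
    rw [Real.sin_arctan, Real.cos_arctan, mul_one_div]
  have hsin_two : Real.sin (2 * Real.arctan z) = 2 * z / (1 + z ^ 2) := by
    rw [Real.sin_two_mul, hsin, mul_assoc, mul_assoc, ← sq, hcos_sq]
    ring
  have hcos_two : Real.cos (2 * Real.arctan z) = (1 - z ^ 2) / (1 + z ^ 2) := by
    rw [Real.cos_two_mul, hcos_sq]
    field_simp
    ring
  rw [show 4 * Real.arctan z = 2 * (2 * Real.arctan z) by ring, Real.sin_two_mul, hsin_two,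
    hcos_two]
  field_simp
  ring

variable {c : ℝ}

theorem deriv_arctan_div_const (hc : c ≠ 0) (r : ℝ) :
    deriv (fun s => Real.arctan (s / c)) r = c / (c ^ 2 + r ^ 2) := by
  rw [(((hasDerivAt_id' r).div_const c).arctan).deriv]
  field_simp

theorem deriv_arctan_const_div (hc : c ≠ 0) (r : ℝ) :
    deriv (fun s => Real.arctan (r / s)) c = -r / (c ^ 2 + r ^ 2) := by
  rw [(((hasDerivAt_const c r).fun_div (hasDerivAt_id' c) hc).arctan).deriv]
  field_simp
  ring

theorem deriv_deriv_arctan_div_const (hc : c ≠ 0) (r : ℝ) :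
    deriv (deriv fun s => Real.arctan (s / c)) r = -(2 * c * r) / (c ^ 2 + r ^ 2) ^ 2 := by
  rw [funext (deriv_arctan_div_const hc), ((hasDerivAt_const r c).fun_div
    ((hasDerivAt_pow 2 r).const_add (c ^ 2)) (by positivity)).deriv]
  simp only [zero_mul, Nat.cast_ofNat, Nat.add_one_sub_one, pow_one, zero_sub]
  ring

theorem deriv_deriv_arctan_const_div (hc : c ≠ 0) (r : ℝ) :
    deriv (deriv fun s => Real.arctan (r / s)) c = 2 * c * r / (c ^ 2 + r ^ 2) ^ 2 := by
  have deriv_eq : (deriv fun s => Real.arctan (r / s)) =ᶠ[𝓝 c] fun s => -r / (s ^ 2 + r ^ 2) :=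
    (eventually_ne_nhds hc).mono fun s hs => deriv_arctan_const_div hs r
  rw [deriv_eq.deriv_eq, ((hasDerivAt_const c (-r)).fun_div
    ((hasDerivAt_pow 2 c).add_const (r ^ 2)) (by positivity)).deriv]
  simp only [zero_mul, Nat.cast_ofNat, Nat.add_one_sub_one, pow_one, neg_mul, sub_neg_eq_add,
    zero_add]
  ring

/-- The polar angle `2 arctan (r / (k (T - t)))` of a self-similar wave map blowing up at
time `T`; the explicit solution in dimension `d` has `k = √(d - 2)`. -/
noncomputable def blowupAngle (k T t r : ℝ) : ℝ :=
  2 * Real.arctan (r / (k * (T - t)))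

theorem contDiff_blowupAngle {m : WithTop ℕ∞} (k T t : ℝ) : ContDiff ℝ m (blowupAngle k T t) :=
  contDiff_const.mul (Real.contDiff_arctan.comp (contDiff_id.div_const _))

variable {k T t : ℝ}

theorem deriv_deriv_blowupAngle_time (hc : k * (T - t) ≠ 0) (r : ℝ) :
    deriv (deriv fun s => blowupAngle k T s r) t =
      4 * k ^ 2 * (k * (T - t)) * r / ((k * (T - t)) ^ 2 + r ^ 2) ^ 2 := by
  unfold blowupAngle
  rw [deriv_deriv_comp_mul_const_sub fun c => 2 * Real.arctan (r / c), deriv_const_mul_field',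
    deriv_const_mul_field, deriv_deriv_arctan_const_div hc, smul_eq_mul]
  ring

theorem deriv_blowupAngle (hc : k * (T - t) ≠ 0) (r : ℝ) :
    deriv (blowupAngle k T t) r = 2 * (k * (T - t)) / ((k * (T - t)) ^ 2 + r ^ 2) := by
  have h := deriv_const_mul_field (2 : ℝ) (v := fun s => Real.arctan (s / (k * (T - t)))) (x := r)
  rw [deriv_arctan_div_const hc, mul_div_assoc'] at h
  exact h

theorem deriv_deriv_blowupAngle (hc : k * (T - t) ≠ 0) (r : ℝ) :
    deriv (deriv (blowupAngle k T t)) r =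
      -(4 * (k * (T - t)) * r) / ((k * (T - t)) ^ 2 + r ^ 2) ^ 2 := by
  rw [show blowupAngle k T t = fun s => 2 * Real.arctan (s / (k * (T - t))) from rfl,
    deriv_const_mul_field', deriv_const_mul_field, deriv_deriv_arctan_div_const hc]
  ring

theorem sin_two_mul_blowupAngle (hc : k * (T - t) ≠ 0) (r : ℝ) :
    Real.sin (2 * blowupAngle k T t r) =
      4 * (k * (T - t)) * r * ((k * (T - t)) ^ 2 - r ^ 2) / ((k * (T - t)) ^ 2 + r ^ 2) ^ 2 := by
  rw [blowupAngle, ← mul_assoc, show (2 * 2 : ℝ) = 4 by norm_num, sin_four_mul_arctan]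
  generalize k * (T - t) = c at *
  field_simp

theorem solvesCorotationalWaveMapAt_blowupAngle {d r : ℝ} (hk : k ^ 2 = d - 2)
    (hc : k * (T - t) ≠ 0) (hr : r ≠ 0) :
    SolvesCorotationalWaveMapAt d (blowupAngle k T) t r := by
  obtain rfl : d = k ^ 2 + 2 := by linarith
  rw [SolvesCorotationalWaveMapAt, deriv_deriv_blowupAngle_time hc, deriv_deriv_blowupAngle hc,
    deriv_blowupAngle hc, sin_two_mul_blowupAngle hc]
  field_simp
  ring

end BlowupSolution

/-- `φ(t,x) = (2/|x|)·arctan(|x|/(√(n−4)(T−t)))` satisfies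
`∂²_t φ − Δφ = ((n−3)/(2|x|³))(2|x|φ − sin(2|x|φ))` for all `t < T`, `x ≠ 0`. -/
theorem stmt_1 (n : ℕ) (hn : 5 ≤ n) (T : ℝ)
    (φ : ℝ → EuclideanSpace ℝ (Fin n) → ℝ)
    (hφ : ∀ (t : ℝ) (x : EuclideanSpace ℝ (Fin n)), t < T → x ≠ 0 →
      φ t x = 2 / ‖x‖ * Real.arctan (‖x‖ / (Real.sqrt ((n : ℝ) - 4) * (T - t))))
    (t : ℝ) (ht : t < T) (x : EuclideanSpace ℝ (Fin n)) (hx : x ≠ 0) :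
    deriv (fun s => deriv (fun s' => φ s' x) s) t - lapl (φ t) x
      = ((n : ℝ) - 3) / (2 * ‖x‖ ^ 3)
          * (2 * ‖x‖ * φ t x - Real.sin (2 * ‖x‖ * φ t x)) := by
  set k := √((n : ℝ) - 4)
  have hn4 : (0 : ℝ) < n - 4 := by
    have : (5 : ℝ) ≤ n := by exact_mod_cast hn
    linarith
  have hk : k ^ 2 = (n : ℝ) - 2 - 2 := by rw [Real.sq_sqrt hn4.le]; ring
  have hc : k * (T - t) ≠ 0 := (mul_pos (Real.sqrt_pos.mpr hn4) (sub_pos.mpr ht)).ne'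
  have hr : ‖x‖ ≠ 0 := norm_ne_zero_iff.mpr hx
  have φ_eq (s : ℝ) (hs : s < T) (y : EuclideanSpace ℝ (Fin n)) (hy : y ≠ 0) :
      φ s y = blowupAngle k T s ‖y‖ / ‖y‖ := by
    rw [hφ s y hs hy, blowupAngle, div_mul_eq_mul_div]
  have time_germ : (fun s => φ s x) =ᶠ[𝓝 t] fun s => blowupAngle k T s ‖x‖ / ‖x‖ :=
    (eventually_lt_nhds ht).mono fun s hs => φ_eq s hs x hx
  have space_germ : φ t =ᶠ[𝓝 x] fun y => blowupAngle k T t ‖y‖ / ‖y‖ :=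
    (eventually_ne_nhds hx).mono fun y hy => φ_eq t ht y hy
  have angle_eq : 2 * ‖x‖ * φ t x = 2 * blowupAngle k T t ‖x‖ := by
    rw [φ_eq t ht x hx, mul_assoc, mul_div_cancel₀ _ hr]
  rw [time_germ.deriv.deriv_eq, lapl_congr space_germ, angle_eq]
  exact (solvesCorotationalWaveMapAt_blowupAngle hk hc hr).deriv_deriv_sub_lapl_div_norm hx
    (contDiff_blowupAngle k T t).contDiffAt
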